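/- (Lemma 1(b)) There exists δ̄* > 0 such that for every δ ∈ (0, δ̄*] there exists a point x*ₐδ ∈ (x* − δ, x* + δ) with b₁δ(x*ₐδ) = 0 which is a locally exponentially stable equilibrium of the average system: for every γ > 0 there exist ρ > 0, c > 0 and λ > 0 such that every solution xₐ of ẋₐ = −(γ/2)·b₁δ(xₐ) with |xₐ(0) − x*ₐδ| ≤ ρ satisfies |xₐ(t) − x*ₐδ| ≤ c·e^{−λt}·|xₐ(0) − x*ₐδ| for all t ≥ 0. -/

import Mathlib

open Real MeasureTheory intervalIntegral Filter

/-- First Fourier sine coefficient of `t ↦ h (x + δ sin (2π t))`. -/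
noncomputable def b1 (h : ℝ → ℝ) (δ x : ℝ) : ℝ :=
  2 * ∫ t in (0:ℝ)..1, h (x + δ * Real.sin (2 * Real.pi * t)) * Real.sin (2 * Real.pi * t)

/-! Since `h` decreases up to its minimiser `a` and increases after it, `b1 h δ` is negative at
`a - δ` and positive at `a + δ`, so it vanishes at some `p` in between. Exponential stability of `p`
follows once the derivative of `b1 h δ` at `p`, which is `b1 (deriv h) δ p`, is positive. As
`deriv h` changes sign at `a` rather than at `p`, this is not immediate. With `s = sin (2π t)` and
`d = a - p`, integration by parts turns `b1 h δ p = 0` into `∫ deriv h (p + δ s) (1 - s²) = 0`, so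
that
`(δ² - d²) b1 (deriv h) δ p = 2 ∫ deriv h (p + δ s) (δ s - d) (δ + d s)`.
Here `deriv h (p + δ s)` has the sign of `p + δ s - a = δ s - d`, and `δ + d s > 0` as `|d| < δ`. -/

section Stability

open Set Metric
open scoped RealInnerProductSpace

variable {E : Type*} [NormedAddCommGroup E]

/-- Local exponential stability of the point `p` for the autonomous equation `x' = f x`.
Solutions are required on `[0, ∞)` only, with a one-sided derivative at `0`. -/
def IsLocallyExpStable [NormedSpace ℝ E] (f : E → E) (p : E) : Prop :=
  ∃ ρ c lam : ℝ, 0 < ρ ∧ 0 < c ∧ 0 < lam ∧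
    ∀ x : ℝ → E, IsIntegralCurveOn x (fun _ ↦ f) (Ici 0) → ‖x 0 - p‖ ≤ ρ →
      ∀ t, 0 ≤ t → ‖x t - p‖ ≤ c * exp (-lam * t) * ‖x 0 - p‖

variable [InnerProductSpace ℝ E] {f : E → E} {p : E} {x : ℝ → E} {ρ μ t : ℝ}

lemma hasDerivWithinAt_norm_sub_sq (hx : IsIntegralCurveOn x (fun _ ↦ f) (Ici 0)) (ht : 0 ≤ t) :
    HasDerivWithinAt (fun s ↦ ‖x s - p‖ ^ 2) (2 * ⟪x t - p, f (x t)⟫) (Ici 0) t :=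
  ((hx t ht).sub_const p).norm_sq

lemma continuousOn_norm_sub_sq (hx : IsIntegralCurveOn x (fun _ ↦ f) (Ici 0)) :
    ContinuousOn (fun s ↦ ‖x s - p‖ ^ 2) (Icc 0 t) := fun _ hs ↦
  (hasDerivWithinAt_norm_sub_sq hx hs.1).continuousWithinAt.mono Icc_subset_Ici_self

lemma mem_closedBall_of_inner_neg_on_sphere (hf : ∀ y ∈ sphere p ρ, ⟪y - p, f y⟫ < 0)
    (hx : IsIntegralCurveOn x (fun _ ↦ f) (Ici 0)) (h0 : x 0 ∈ closedBall p ρ) (ht : 0 ≤ t) :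
    x t ∈ closedBall p ρ := by
  have hρ : 0 ≤ ρ := dist_nonneg.trans h0
  rw [mem_closedBall_iff_norm] at h0 ⊢
  refine (sq_le_sq₀ (norm_nonneg _) hρ).1 <|
    image_le_of_deriv_right_lt_deriv_boundary (B := fun _ ↦ ρ ^ 2) (B' := fun _ ↦ 0)
      (continuousOn_norm_sub_sq hx)
      (fun s hs ↦ (hasDerivWithinAt_norm_sub_sq hx hs.1).mono (Ici_subset_Ici.2 hs.1))
      (pow_le_pow_left₀ (norm_nonneg _) h0 2) (fun s ↦ hasDerivAt_const s _)
      (fun s _ hs ↦ ?_) (right_mem_Icc.2 ht)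
  have hsphere : x s ∈ sphere p ρ :=
    mem_sphere_iff_norm.2 ((sq_eq_sq₀ (norm_nonneg _) hρ).1 hs)
  linarith [hf (x s) hsphere]

lemma norm_sub_le_exp_mul_of_inner_le (hx : IsIntegralCurveOn x (fun _ ↦ f) (Ici 0))
    (hf : ∀ s, 0 ≤ s → ⟪x s - p, f (x s)⟫ ≤ -μ * ‖x s - p‖ ^ 2) (ht : 0 ≤ t) :
    ‖x t - p‖ ≤ exp (-μ * t) * ‖x 0 - p‖ := by
  have hgronwall : ‖x t - p‖ ^ 2 ≤ gronwallBound (‖x 0 - p‖ ^ 2) (-2 * μ) 0 (t - 0) :=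
    le_gronwallBound_of_liminf_deriv_right_le (continuousOn_norm_sub_sq hx)
      (fun s hs _ hr ↦ ((hasDerivWithinAt_norm_sub_sq hx hs.1).mono
        (Ici_subset_Ici.2 hs.1)).liminf_right_slope_le hr)
      le_rfl (fun s hs ↦ by linarith [hf s hs.1]) t (right_mem_Icc.2 ht)
  refine (sq_le_sq₀ (norm_nonneg _) (by positivity)).1 (hgronwall.trans_eq ?_)
  rw [gronwallBound_ε0, sub_zero, mul_pow, ← exp_nat_mul, mul_comm]
  congr 2
  push_cast
  ring

lemma isLocallyExpStable_of_inner_le (hρ : 0 < ρ) (hμ : 0 < μ)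
    (hf : ∀ y ∈ closedBall p ρ, ⟪y - p, f y⟫ ≤ -μ * ‖y - p‖ ^ 2) : IsLocallyExpStable f p := by
  refine ⟨ρ, 1, μ, hρ, one_pos, hμ, fun x hx h0 t ht ↦ ?_⟩
  have hsphere : ∀ y ∈ sphere p ρ, ⟪y - p, f y⟫ < 0 := fun y hy ↦ by
    have hle := hf y (sphere_subset_closedBall hy)
    rw [mem_sphere_iff_norm.1 hy] at hle
    exact hle.trans_lt (by nlinarith [pow_pos hρ 2])
  rw [one_mul]
  exact norm_sub_le_exp_mul_of_inner_le hx (fun s hs ↦ hf _ <|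
    mem_closedBall_of_inner_neg_on_sphere hsphere hx (mem_closedBall_iff_norm.2 h0) hs) ht

lemma isLocallyExpStable_of_hasFDerivAt {A : E →L[ℝ] E} (hf : HasFDerivAt f A p) (hp : f p = 0)
    (hμ : 0 < μ) (hA : ∀ v, ⟪v, A v⟫ ≤ -μ * ‖v‖ ^ 2) : IsLocallyExpStable f p := by
  obtain ⟨ρ, hρ, hball⟩ :=
    nhds_basis_closedBall.eventually_iff.1 ((hasFDerivAt_iff_isLittleO.1 hf).def (half_pos hμ))
  refine isLocallyExpStable_of_inner_le hρ (half_pos hμ) fun y hy ↦ ?_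
  have hremainder : ‖f y - A (y - p)‖ ≤ μ / 2 * ‖y - p‖ := by
    simpa only [hp, sub_zero] using hball hy
  calc ⟪y - p, f y⟫ = ⟪y - p, A (y - p)⟫ + ⟪y - p, f y - A (y - p)⟫ := by
        rw [← inner_add_right, add_sub_cancel]
    _ ≤ -μ * ‖y - p‖ ^ 2 + ‖y - p‖ * (μ / 2 * ‖y - p‖) :=
        add_le_add (hA _) ((real_inner_le_norm _ _).trans (by gcongr))
    _ = -(μ / 2) * ‖y - p‖ ^ 2 := by ring

lemma isLocallyExpStable_of_hasDerivAt_neg {f : ℝ → ℝ} {f' p : ℝ} (hf : HasDerivAt f f' p)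
    (hp : f p = 0) (hf' : f' < 0) : IsLocallyExpStable f p := by
  refine isLocallyExpStable_of_hasFDerivAt hf.hasFDerivAt hp (neg_pos.2 hf') fun v ↦ le_of_eq ?_
  simp only [ContinuousLinearMap.toSpanSingleton_apply, smul_eq_mul, RCLike.inner_apply,
    conj_trivial, norm_eq_abs, sq_abs]
  ring

end Stability

section Unimodal

open Set

section Order

variable {α β : Type*} [ConditionallyCompleteLinearOrder α] [TopologicalSpace α] [OrderTopology α]
  [DenselyOrdered α] [LinearOrder β] [TopologicalSpace β] [OrderClosedTopology β]
  {f : α → β} {a : α}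

lemma strictMonoOn_Ici_of_injOn (hf : ContinuousOn f (Ici a))
    (hinj : InjOn f (Ici a)) (hmin : ∀ x ∈ Ici a, f a ≤ f x) : StrictMonoOn f (Ici a) :=
  fun _ hx y hy hxy ↦ (hf.mono Icc_subset_Ici_self).strictMonoOn_of_injOn_Icc hy (hmin y hy)
    (hinj.mono Icc_subset_Ici_self) ⟨hx, hxy.le⟩ ⟨hy, le_rfl⟩ hxy

lemma strictAntiOn_Iic_of_injOn (hf : ContinuousOn f (Iic a))
    (hinj : InjOn f (Iic a)) (hmin : ∀ x ∈ Iic a, f a ≤ f x) : StrictAntiOn f (Iic a) :=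
  fun x hx _ hy hxy ↦ (hf.mono Icc_subset_Iic_self).strictAntiOn_of_injOn_Icc hx (hmin x hx)
    (hinj.mono Icc_subset_Iic_self) ⟨le_rfl, hx⟩ ⟨hxy.le, hy⟩ hxy

end Order

lemma injOn_of_le_dist {X Y : Type*} [MetricSpace X] [PseudoMetricSpace Y] {f : X → Y} {s : Set X}
    {α : ℝ → ℝ} (hα : ∀ r, 0 < r → 0 < α r)
    (hf : ∀ x ∈ s, ∀ y ∈ s, α (dist x y) ≤ dist (f x) (f y)) : InjOn f s := by
  intro x hx y hy hxy
  by_contra hne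
  have hle : α (dist x y) ≤ 0 := by simpa only [hxy, dist_self] using hf x hx y hy
  exact (hα _ (dist_pos.2 hne)).not_ge hle

lemma sub_mul_deriv_nonneg {h : ℝ → ℝ} {a : ℝ} (hd : Differentiable ℝ h)
    (hanti : AntitoneOn h (Iic a)) (hmono : MonotoneOn h (Ici a)) (y : ℝ) :
    0 ≤ (y - a) * deriv h y := by
  rcases le_total a y with hy | hy
  · rw [← (hd y).derivWithin (uniqueDiffOn_Ici a y hy)]
    exact mul_nonneg (sub_nonneg.2 hy) hmono.derivWithin_nonneg
  · rw [← (hd y).derivWithin (uniqueDiffOn_Iic a y hy)]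
    exact mul_nonneg_of_nonpos_of_nonpos (sub_nonpos.2 hy) hanti.derivWithin_nonpos

lemma strictAntiOn_Iic_and_strictMonoOn_Ici_of_le_abs_sub {h α : ℝ → ℝ} {a : ℝ}
    (hh : Continuous h) (hmin : ∀ x, h a ≤ h x) (hα : ∀ r, 0 < r → 0 < α r)
    (hlb : ∀ x y, 0 ≤ (x - a) * (y - a) → α |y - x| ≤ |h y - h x|) :
    StrictAntiOn h (Iic a) ∧ StrictMonoOn h (Ici a) := by
  have hinj_Iic : InjOn h (Iic a) := injOn_of_le_dist hα fun x hx y hy ↦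
    hlb y x (mul_nonneg_of_nonpos_of_nonpos (sub_nonpos.2 hy) (sub_nonpos.2 hx))
  have hinj_Ici : InjOn h (Ici a) := injOn_of_le_dist hα fun x hx y hy ↦
    hlb y x (mul_nonneg (sub_nonneg.2 hy) (sub_nonneg.2 hx))
  exact ⟨strictAntiOn_Iic_of_injOn hh.continuousOn hinj_Iic fun x _ ↦ hmin x,
    strictMonoOn_Ici_of_injOn hh.continuousOn hinj_Ici fun x _ ↦ hmin x⟩

end Unimodal

section SineAverage

open Set

lemma exists_mem_Icc_sin_two_pi_mul_eq {s : ℝ} (hs : s ∈ Icc (-1) 1) :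
    ∃ t ∈ Icc (0 : ℝ) 1, sin (2 * π * t) = s := by
  have hperiodic : Function.Periodic (fun t ↦ sin (2 * π * t)) 1 := fun t ↦ by
    simp only [mul_add, mul_one, sin_add_two_pi]
  obtain ⟨t, ht, hts⟩ := hperiodic.exists_mem_Ico₀ one_pos (arcsin s / (2 * π))
  rw [mul_div_cancel₀ _ two_pi_pos.ne', sin_arcsin hs.1 hs.2] at hts
  exact ⟨t, Ico_subset_Icc_self ht, hts.symm⟩

lemma integral_comp_sin_two_pi_mul_pos {φ : ℝ → ℝ} (hφ : ContinuousOn φ (Icc (-1) 1))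
    (hnonneg : ∀ s ∈ Icc (-1 : ℝ) 1, 0 ≤ φ s) (hpos : ∃ s ∈ Icc (-1 : ℝ) 1, 0 < φ s) :
    0 < ∫ t in (0 : ℝ)..1, φ (sin (2 * π * t)) := by
  obtain ⟨s, hs, hφs⟩ := hpos
  obtain ⟨t, ht, rfl⟩ := exists_mem_Icc_sin_two_pi_mul_eq hs
  exact integral_pos one_pos (hφ.comp (by fun_prop) fun t _ ↦ sin_mem_Icc _)
    (fun t _ ↦ hnonneg _ (sin_mem_Icc _)) ⟨t, ht, hφs⟩

lemma integral_sin_two_pi_mul : ∫ t in (0 : ℝ)..1, sin (2 * π * t) = 0 := by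
  simp [intervalIntegral.integral_comp_mul_left _ two_pi_pos.ne']

end SineAverage

section ParametricIntegral

open Set Metric

lemma hasDerivAt_intervalIntegral_of_continuous {E : Type*} [NormedAddCommGroup E]
    [NormedSpace ℝ E] {F F' : ℝ → ℝ → E} (hF : ∀ x, Continuous (F x))
    (hF' : Continuous fun q : ℝ × ℝ ↦ F' q.1 q.2)
    (hderiv : ∀ x t, HasDerivAt (fun y ↦ F y t) (F' x t) x) (a b x : ℝ) :
    HasDerivAt (fun y ↦ ∫ t in a..b, F y t) (∫ t in a..b, F' x t) x := by
  obtain ⟨C, hC⟩ := ((isCompact_closedBall x 1).prod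
    (isCompact_uIcc (a := a) (b := b))).exists_bound_of_continuousOn hF'.continuousOn
  exact (intervalIntegral.hasDerivAt_integral_of_dominated_loc_of_deriv_le
    (bound := fun _ ↦ C) (closedBall_mem_nhds x one_pos)
    (Eventually.of_forall fun y ↦ (hF y).aestronglyMeasurable)
    ((hF x).intervalIntegrable a b)
    (hF'.comp (Continuous.prodMk_right x)).aestronglyMeasurable
    (Eventually.of_forall fun t ht y hy ↦ hC (y, t) ⟨hy, uIoc_subset_uIcc ht⟩)
    intervalIntegrable_const
    (Eventually.of_forall fun t _ y _ ↦ hderiv y t)).2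

end ParametricIntegral

section FourierCoefficient

open Set

variable {h : ℝ → ℝ} {δ x : ℝ}

lemma b1_neg_left (h : ℝ → ℝ) (δ x : ℝ) : b1 (-h) δ x = -b1 h δ x := by
  simp only [b1, Pi.neg_apply, neg_mul, intervalIntegral.integral_neg, mul_neg]

lemma b1_eq_integral_sub_mul (hh : Continuous h) (δ x : ℝ) :
    b1 h δ x = 2 * ∫ t in (0 : ℝ)..1, (h (x + δ * sin (2 * π * t)) - h x) * sin (2 * π * t) := by
  simp only [sub_mul]
  rw [intervalIntegral.integral_sub (Continuous.intervalIntegrable (by fun_prop) _ _)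
    (Continuous.intervalIntegrable (by fun_prop) _ _), intervalIntegral.integral_const_mul,
    integral_sin_two_pi_mul, mul_zero, sub_zero, b1]

lemma b1_pos_of_monotoneOn (hh : Continuous h) (hδ : 0 ≤ δ)
    (hmono : MonotoneOn h (Icc (x - δ) (x + δ))) (hlt : h (x - δ) < h (x + δ)) :
    0 < b1 h δ x := by
  rw [b1_eq_integral_sub_mul hh]
  refine mul_pos two_pos (integral_comp_sin_two_pi_mul_pos
    (φ := fun s ↦ (h (x + δ * s) - h x) * s) (by fun_prop) (fun s hs ↦ ?_) ?_)
  · have hx : x ∈ Icc (x - δ) (x + δ) := ⟨by linarith, by linarith⟩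
    have hy : x + δ * s ∈ Icc (x - δ) (x + δ) := ⟨by nlinarith [hs.1], by nlinarith [hs.2]⟩
    rcases le_total 0 s with h0 | h0
    · exact mul_nonneg (sub_nonneg.2 (hmono hx hy (by nlinarith))) h0
    · exact mul_nonneg_of_nonpos_of_nonpos (sub_nonpos.2 (hmono hy hx (by nlinarith))) h0
  · rcases lt_or_ge (h x) (h (x + δ)) with hright | hright
    · exact ⟨1, by norm_num, by simpa using hright⟩
    · exact ⟨-1, by norm_num, by simpa [← sub_eq_add_neg] using hlt.trans_le hright⟩

lemma b1_neg_of_antitoneOn (hh : Continuous h) (hδ : 0 ≤ δ)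
    (hanti : AntitoneOn h (Icc (x - δ) (x + δ))) (hlt : h (x + δ) < h (x - δ)) :
    b1 h δ x < 0 := by
  have hpos : 0 < b1 (-h) δ x := b1_pos_of_monotoneOn hh.neg hδ hanti.neg (neg_lt_neg hlt)
  rwa [b1_neg_left, neg_pos] at hpos

lemma hasDerivAt_b1 (hh : ContDiff ℝ 1 h) (δ x : ℝ) :
    HasDerivAt (b1 h δ) (b1 (deriv h) δ x) x := by
  have : Continuous h := hh.continuous
  have : Continuous (deriv h) := hh.continuous_deriv le_rfl
  refine (hasDerivAt_intervalIntegral_of_continuous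
    (F := fun y t ↦ h (y + δ * sin (2 * π * t)) * sin (2 * π * t))
    (F' := fun y t ↦ deriv h (y + δ * sin (2 * π * t)) * sin (2 * π * t))
    (by fun_prop) (by fun_prop) (fun y t ↦ ?_) 0 1 x).const_mul 2
  have hd : DifferentiableAt ℝ h (y + δ * sin (2 * π * t)) := hh.differentiable one_ne_zero _
  exact (hd.hasDerivAt.comp_add_const y _).mul_const _

lemma b1_eq_integral_deriv_mul_one_sub_sq (hh : ContDiff ℝ 1 h) (δ x : ℝ) :
    b1 h δ x = 2 * (δ * ∫ t in (0 : ℝ)..1,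
      deriv h (x + δ * sin (2 * π * t)) * (1 - sin (2 * π * t) ^ 2)) := by
  have : Continuous (deriv h) := hh.continuous_deriv le_rfl
  have hlin (t : ℝ) : HasDerivAt (fun t ↦ 2 * π * t) (2 * π) t := by
    simpa using (hasDerivAt_id t).const_mul (2 * π)
  have hu (t : ℝ) : HasDerivAt (fun t ↦ h (x + δ * sin (2 * π * t)))
      (deriv h (x + δ * sin (2 * π * t)) * (δ * (cos (2 * π * t) * (2 * π)))) t :=
    (hh.differentiable one_ne_zero _).hasDerivAt.comp t (((hlin t).sin.const_mul δ).const_add x)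
  have hv (t : ℝ) : HasDerivAt (fun t ↦ -cos (2 * π * t) / (2 * π)) (sin (2 * π * t)) t := by
    refine ((hlin t).cos.neg.div_const (2 * π)).congr_deriv ?_
    field_simp
  have hparts := integral_mul_deriv_eq_deriv_mul (a := 0) (b := 1) (fun t _ ↦ hu t)
    (fun t _ ↦ hv t) (Continuous.intervalIntegrable (by fun_prop) _ _)
    (Continuous.intervalIntegrable (by fun_prop) _ _)
  simp only [mul_one, mul_zero, sin_two_pi, sin_zero, cos_two_pi, cos_zero, sub_self,
    zero_sub] at hparts
  rw [b1, hparts, ← intervalIntegral.integral_neg, ← intervalIntegral.integral_const_mul δ]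
  congr 2 with t
  rw [← cos_sq']
  field_simp

lemma two_mul_integral_deriv_mul_eq_b1_sub_b1 (hh : ContDiff ℝ 1 h) (δ x d : ℝ) :
    2 * ∫ t in (0 : ℝ)..1, deriv h (x + δ * sin (2 * π * t)) *
        ((δ * sin (2 * π * t) - d) * (δ + d * sin (2 * π * t))) =
      (δ ^ 2 - d ^ 2) * b1 (deriv h) δ x - d * b1 h δ x := by
  have : Continuous (deriv h) := hh.continuous_deriv le_rfl
  have hsplit : (∫ t in (0 : ℝ)..1, deriv h (x + δ * sin (2 * π * t)) *
        ((δ * sin (2 * π * t) - d) * (δ + d * sin (2 * π * t)))) =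
      (δ ^ 2 - d ^ 2) *
        (∫ t in (0 : ℝ)..1, deriv h (x + δ * sin (2 * π * t)) * sin (2 * π * t)) -
      d * δ * ∫ t in (0 : ℝ)..1,
        deriv h (x + δ * sin (2 * π * t)) * (1 - sin (2 * π * t) ^ 2) := by
    rw [← intervalIntegral.integral_const_mul, ← intervalIntegral.integral_const_mul,
      ← intervalIntegral.integral_sub (Continuous.intervalIntegrable (by fun_prop) _ _)
        (Continuous.intervalIntegrable (by fun_prop) _ _)]
    congr 1 with t
    ring
  rw [hsplit, b1_eq_integral_deriv_mul_one_sub_sq hh, b1]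
  ring

end FourierCoefficient

section Equilibrium

open Set

variable {h : ℝ → ℝ} {a δ p : ℝ}

lemma exists_b1_eq_zero (hh : ContDiff ℝ 1 h) (hanti : AntitoneOn h (Iic a))
    (hmono : MonotoneOn h (Ici a)) (hmin : ∀ x, x ≠ a → h a < h x) (hδ : 0 < δ) :
    ∃ p ∈ Ioo (a - δ) (a + δ), b1 h δ p = 0 := by
  have hcont : Continuous (b1 h δ) :=
    continuous_iff_continuousAt.2 fun x ↦ (hasDerivAt_b1 hh δ x).continuousAt
  have hleft : b1 h δ (a - δ) < 0 := by
    refine b1_neg_of_antitoneOn hh.continuous hδ.le (hanti.mono ?_) ?_ <;> rw [sub_add_cancel]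
    · exact Icc_subset_Iic_self
    · exact hmin _ (by linarith)
  have hright : 0 < b1 h δ (a + δ) := by
    refine b1_pos_of_monotoneOn hh.continuous hδ.le (hmono.mono ?_) ?_ <;> rw [add_sub_cancel_right]
    · exact Icc_subset_Ici_self
    · exact hmin _ (by linarith)
  exact intermediate_value_Ioo (by linarith) hcont.continuousOn ⟨hleft, hright⟩

lemma b1_deriv_pos_of_b1_eq_zero (hh : ContDiff ℝ 1 h) (hanti : AntitoneOn h (Iic a))
    (hmono : MonotoneOn h (Ici a)) (hp : p ∈ Ioo (a - δ) (a + δ)) (hlt : h a < h (p + δ))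
    (hzero : b1 h δ p = 0) : 0 < b1 (deriv h) δ p := by
  have hd : Differentiable ℝ h := hh.differentiable one_ne_zero
  have : Continuous (deriv h) := hh.continuous_deriv le_rfl
  have hdist : |a - p| < δ := abs_lt.2 ⟨by linarith [hp.2], by linarith [hp.1]⟩
  have hδ : 0 < δ := (abs_nonneg _).trans_lt hdist
  have hfactor : ∀ s ∈ Icc (-1 : ℝ) 1, 0 < δ + (a - p) * s := fun s hs ↦ by
    have hle : |(a - p) * s| ≤ |a - p| := by
      rw [abs_mul]
      exact mul_le_of_le_one_right (abs_nonneg _) (abs_le.2 hs)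
    linarith [neg_abs_le ((a - p) * s)]
  have hintegral : 0 < ∫ t in (0 : ℝ)..1, deriv h (p + δ * sin (2 * π * t)) *
      ((δ * sin (2 * π * t) - (a - p)) * (δ + (a - p) * sin (2 * π * t))) := by
    refine integral_comp_sin_two_pi_mul_pos
      (φ := fun s ↦ deriv h (p + δ * s) * ((δ * s - (a - p)) * (δ + (a - p) * s)))
      (by fun_prop) (fun s hs ↦ ?_) ?_
    · have hsign := sub_mul_deriv_nonneg hd hanti hmono (p + δ * s)
      linarith [mul_nonneg hsign (hfactor s hs).le]
    · obtain ⟨y, hy, hslope⟩ := exists_deriv_eq_slope h (by linarith [hp.1] : a < p + δ)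
        hd.continuous.continuousOn hd.differentiableOn
      have hpos : 0 < deriv h y := by
        rw [hslope]
        exact div_pos (sub_pos.2 hlt) (by linarith [hp.1])
      have hs : (y - p) / δ ∈ Icc (-1 : ℝ) 1 :=
        ⟨(le_div_iff₀ hδ).2 (by linarith [hy.1, hp.2]), (div_le_one hδ).2 (by linarith [hy.2])⟩
      refine ⟨(y - p) / δ, hs, mul_pos ?_ (mul_pos ?_ (hfactor _ hs))⟩ <;>
        rw [mul_div_cancel₀ _ hδ.ne']
      · rwa [add_sub_cancel]
      · linarith [hy.1]
  have hidentity := two_mul_integral_deriv_mul_eq_b1_sub_b1 hh δ p (a - p)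
  rw [hzero, mul_zero, sub_zero] at hidentity
  have hcoeff : 0 < δ ^ 2 - (a - p) ^ 2 := sub_pos.2 (sq_lt_sq.2 (by rwa [abs_of_pos hδ]))
  exact pos_of_mul_pos_right (hidentity ▸ mul_pos two_pos hintegral) hcoeff.le

theorem average_loc_exp_stable_equilibrium_general (hh : ContDiff ℝ 1 h)
    (hanti : AntitoneOn h (Iic a)) (hmono : MonotoneOn h (Ici a))
    (hmin : ∀ x, x ≠ a → h a < h x) (hδ : 0 < δ) :
    ∃ p ∈ Ioo (a - δ) (a + δ), b1 h δ p = 0 ∧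
      ∀ γ : ℝ, 0 < γ → IsLocallyExpStable (fun x ↦ -(γ / 2) * b1 h δ x) p := by
  obtain ⟨p, hp, hzero⟩ := exists_b1_eq_zero hh hanti hmono hmin hδ
  have hpos : 0 < b1 (deriv h) δ p :=
    b1_deriv_pos_of_b1_eq_zero hh hanti hmono hp (hmin _ (by linarith [hp.1])) hzero
  refine ⟨p, hp, hzero, fun γ hγ ↦ isLocallyExpStable_of_hasDerivAt_neg
    ((hasDerivAt_b1 hh δ p).const_mul _) (by rw [hzero, mul_zero]) ?_⟩
  exact mul_neg_of_neg_of_pos (by linarith) hpos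

end Equilibrium

/-- Lemma 1(b): for small `δ` the average system has a locally exponentially
stable equilibrium in `(x* - δ, x* + δ)`. -/
theorem average_loc_exp_stable_equilibrium (h : ℝ → ℝ) (hsmooth : ContDiff ℝ (⊤ : ℕ∞) h)
    (xstar : ℝ) (hmin : ∀ x : ℝ, x ≠ xstar → h xstar < h x)
    (α : ℝ → ℝ) (hα_cont : ContinuousOn α (Set.Ici 0))
    (hα_mono : StrictMonoOn α (Set.Ici 0)) (hα0 : α 0 = 0)
    (hα_top : Tendsto α atTop atTop)
    (hlb : ∀ x₁ x₂ : ℝ, (x₁ - xstar) * (x₂ - xstar) ≥ 0 → α |x₂ - x₁| ≤ |h x₂ - h x₁|) :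
    ∃ δstar : ℝ, 0 < δstar ∧ ∀ δ : ℝ, δ ∈ Set.Ioc 0 δstar →
      ∃ xad ∈ Set.Ioo (xstar - δ) (xstar + δ), b1 h δ xad = 0 ∧
        ∀ γ : ℝ, 0 < γ → ∃ ρ c lam : ℝ, 0 < ρ ∧ 0 < c ∧ 0 < lam ∧
          ∀ xa : ℝ → ℝ, Differentiable ℝ xa →
            (∀ t : ℝ, 0 ≤ t → HasDerivAt xa (-(γ / 2) * b1 h δ (xa t)) t) →
            |xa 0 - xad| ≤ ρ →
            ∀ t : ℝ, 0 ≤ t → |xa t - xad| ≤ c * Real.exp (-lam * t) * |xa 0 - xad| := by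
  have hα_pos : ∀ r, 0 < r → 0 < α r := fun r hr ↦
    hα0 ▸ hα_mono (Set.mem_Ici.2 le_rfl) (Set.mem_Ici.2 hr.le) hr
  have hmin_le : ∀ x, h xstar ≤ h x := fun x ↦
    (eq_or_ne x xstar).elim (fun hx ↦ hx ▸ le_rfl) fun hx ↦ (hmin x hx).le
  obtain ⟨hanti, hmono⟩ :=
    strictAntiOn_Iic_and_strictMonoOn_Ici_of_le_abs_sub hsmooth.continuous hmin_le hα_pos hlb
  refine ⟨1, one_pos, fun δ hδ ↦ ?_⟩
  obtain ⟨p, hp, hzero, hstable⟩ := average_loc_exp_stable_equilibrium_general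
    (hsmooth.of_le (by simp)) hanti.antitoneOn hmono.monotoneOn hmin hδ.1
  refine ⟨p, hp, hzero, fun γ hγ ↦ ?_⟩
  obtain ⟨ρ, c, lam, hρ, hc, hlam, hbound⟩ := hstable γ hγ
  exact ⟨ρ, c, lam, hρ, hc, hlam, fun xa _ hode ↦
    hbound xa fun t ht ↦ (hode t ht).hasDerivWithinAt⟩
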